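/- Let d₁, N be positive integers, L ≥ 0 and R > 0, and let h : ℝ^{d₁} → ℝ be any function of the form h(y) = ∑_{i=1}^{(N+1)^{d₁}} c_i ψ( (N/(2R)) (y − b_i) ) with |c_i| ≤ L, b_i ∈ ℝ^{d₁}, where ψ(y) = σ(min{ min_{k≠j}(1 + y_k − y_j), min_k(1 + y_k), min_k(1 − y_k) }) and σ(u) = max{u,0}. Let μ be a finite measure, let φ_1,…,φ_{d₁} be an orthonormal family in L²(μ), and let T(g) = (⟨g, φ_1⟩_{L²(μ)}, …, ⟨g, φ_{d₁}⟩_{L²(μ)}). Then for all u, v ∈ L²(μ), |h(T(u)) − h(T(v))| ≤ (L/R) · N (N+1)^{d₁} (d₁³ + d₁²) ‖u − v‖_{L²(μ)}. -/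

import Mathlib

open MeasureTheory
open scoped RealInnerProductSpace

/-- The function `ψ(y) = σ(min{min_{k≠j}(1 + y_k − y_j), min_k(1 + y_k), min_k(1 − y_k)})`,
where `σ` is the ReLU.  (For `k = j` the value `1 + y_k` is used, which is already a member
of the second family, so the minimum is unchanged.) -/
noncomputable def psi (d : ℕ) (hd : 0 < d) (y : Fin d → ℝ) : ℝ :=
  max ((Finset.univ : Finset ((Fin d × Fin d) ⊕ (Fin d ⊕ Fin d))).inf'
    ⟨Sum.inr (Sum.inl ⟨0, hd⟩), Finset.mem_univ _⟩
    (fun p => match p with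
      | Sum.inl (k, j) => if k = j then 1 + y k else 1 + y k - y j
      | Sum.inr (Sum.inl k) => 1 + y k
      | Sum.inr (Sum.inr k) => 1 - y k)) 0

/-!
The affine forms `1 + yₖ - yⱼ`, `1 + yₖ`, `1 - yₖ` are `2`-Lipschitz for the supremum norm, and
Lipschitz constants survive finite minima and truncation, so `ψ` is `2`-Lipschitz. Each coordinate
`⟪·, φₖ⟫` is `1`-Lipschitz by Cauchy–Schwarz. Rescaling by `N / (2R)` and summing with weights `cᵢ`
therefore gives the Lipschitz constant `(∑ |cᵢ|) N / R`, which `d₁³ + d₁² ≥ 1` only enlarges.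
-/

open scoped NNReal

section Lipschitz

variable {α ι : Type*} [PseudoEMetricSpace α]

theorem lipschitzWith_finset_inf' {s : Finset ι} (hs : s.Nonempty)
    {f : ι → α → ℝ} {K : ℝ≥0} (hf : ∀ i ∈ s, LipschitzWith K (f i)) :
    LipschitzWith K fun x => s.inf' hs fun i => f i x := by
  have h : LipschitzWith K (s.inf' hs f) :=
    Finset.inf'_induction hs f (fun _ hg _ hh => max_self K ▸ hg.min hh) hf
  simpa only [← Finset.inf'_apply] using h

theorem lipschitzWith_finset_sum {E : Type*} [SeminormedAddCommGroup E]
    (s : Finset ι) {f : ι → α → E} {K : ι → ℝ≥0} (hf : ∀ i ∈ s, LipschitzWith (K i) (f i)) :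
    LipschitzWith (∑ i ∈ s, K i) fun x => ∑ i ∈ s, f i x := by
  classical
  induction s using Finset.induction_on with
  | empty => simpa using LipschitzWith.const (0 : E)
  | insert i s hi ih =>
    simp only [Finset.sum_insert hi]
    exact (hf i (Finset.mem_insert_self i s)).add
      (ih fun j hj => hf j (Finset.mem_insert_of_mem hj))

end Lipschitz

/-- The affine forms whose minimum is truncated at `0` to give `psi`, indexed as in `psi`. -/
noncomputable def psiForm {d : ℕ} : (Fin d × Fin d) ⊕ (Fin d ⊕ Fin d) → (Fin d → ℝ) → ℝ
  | Sum.inl (k, j) => fun y => if k = j then 1 + y k else 1 + y k - y j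
  | Sum.inr (Sum.inl k) => fun y => 1 + y k
  | Sum.inr (Sum.inr k) => fun y => 1 - y k

theorem psi_eq_max_inf'_psiForm {d : ℕ} (hd : 0 < d) (y : Fin d → ℝ) :
    psi d hd y =
      max (Finset.univ.inf' ⟨Sum.inr (Sum.inl ⟨0, hd⟩), Finset.mem_univ _⟩
        fun p => psiForm p y) 0 := by
  unfold psi
  congr 2
  funext p
  rcases p with ⟨k, j⟩ | k | k <;> rfl

theorem lipschitzWith_psiForm {d : ℕ} (p : (Fin d × Fin d) ⊕ (Fin d ⊕ Fin d)) :
    LipschitzWith 2 (psiForm p) := by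
  have coord (k : Fin d) : LipschitzWith 1 fun y : Fin d → ℝ => y k := LipschitzWith.eval k
  have one_add_coord (k : Fin d) : LipschitzWith 1 fun y : Fin d → ℝ => 1 + y k := by
    simpa only [zero_add] using (LipschitzWith.const 1).add (coord k)
  have one_sub_coord (k : Fin d) : LipschitzWith 1 fun y : Fin d → ℝ => 1 - y k := by
    simpa only [zero_add] using (LipschitzWith.const 1).sub (coord k)
  rcases p with ⟨k, j⟩ | k | k
  · by_cases hkj : k = j
    · simpa only [psiForm, if_pos hkj] using (one_add_coord k).weaken one_le_two
    · simpa only [psiForm, if_neg hkj, one_add_one_eq_two] using (one_add_coord k).sub (coord j)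
  · exact (one_add_coord k).weaken one_le_two
  · exact (one_sub_coord k).weaken one_le_two

theorem lipschitzWith_psi {d : ℕ} (hd : 0 < d) : LipschitzWith 2 (psi d hd) := by
  rw [funext (psi_eq_max_inf'_psiForm hd)]
  exact (lipschitzWith_finset_inf' _ fun p _ => lipschitzWith_psiForm p).max_const 0

/-- The structured network `y ↦ ∑ᵢ cᵢ f(a(y − bᵢ))` with activation `f`. Taking `f = psi` and
`a = N / (2R)` gives the networks of the class `H_NN`. -/
def structuredNetwork {E ι : Type*} [AddCommGroup E] [Module ℝ E] [Fintype ι]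
    (f : E → ℝ) (a : ℝ) (c : ι → ℝ) (b : ι → E) (y : E) : ℝ :=
  ∑ i, c i * f (a • (y - b i))

theorem lipschitzWith_structuredNetwork {E ι : Type*} [SeminormedAddCommGroup E]
    [NormedSpace ℝ E] [Fintype ι] {f : E → ℝ} {K : ℝ≥0} (hf : LipschitzWith K f)
    (a : ℝ) (c : ι → ℝ) (b : ι → E) :
    LipschitzWith (∑ i, ‖c i‖₊ * (K * ‖a‖₊)) (structuredNetwork f a c b) := by
  have lipschitz_rescale (i : ι) : LipschitzWith ‖a‖₊ fun y : E => a • (y - b i) := by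
    simpa only [mul_one, add_zero, Function.comp_def, id] using
      (lipschitzWith_smul a).comp (LipschitzWith.id.sub (LipschitzWith.const (b i)))
  exact lipschitzWith_finset_sum _ fun i _ =>
    (lipschitzWith_smul (c i)).comp (hf.comp (lipschitz_rescale i))

/-- The projection step `T(u) = (⟪u, φ k⟫)ₖ` of a functional network. The target `κ → ℝ` carries
the supremum norm, so that `T` is nonexpansive as soon as every `φ k` lies in the unit ball. -/
def innerCoords {H κ : Type*} [SeminormedAddCommGroup H] [InnerProductSpace ℝ H]
    (φ : κ → H) (u : H) : κ → ℝ :=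
  fun k => ⟪u, φ k⟫

theorem lipschitzWith_innerCoords {H κ : Type*} [SeminormedAddCommGroup H]
    [InnerProductSpace ℝ H] [Fintype κ] {φ : κ → H} (hφ : ∀ k, ‖φ k‖ ≤ 1) :
    LipschitzWith 1 (innerCoords φ) := by
  refine LipschitzWith.mk_one fun u v => (dist_pi_le_iff dist_nonneg).2 fun k => ?_
  calc dist ⟪u, φ k⟫ ⟪v, φ k⟫ = |⟪u - v, φ k⟫| := by rw [Real.dist_eq, inner_sub_left]
    _ ≤ ‖u - v‖ * ‖φ k‖ := abs_real_inner_le_norm _ _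
    _ ≤ ‖u - v‖ * 1 := by gcongr; exact hφ k
    _ = dist u v := by rw [mul_one, dist_eq_norm]

theorem abs_network_proj_sub_le_general {H ι : Type*} [SeminormedAddCommGroup H]
    [InnerProductSpace ℝ H] [Fintype ι] {d : ℕ} (hd : 0 < d) {N L R : ℝ} (hN : 0 ≤ N)
    (hR : 0 < R) {c : ι → ℝ} (hc : ∀ i, |c i| ≤ L) (b : ι → Fin d → ℝ)
    {φ : Fin d → H} (hφ : ∀ k, ‖φ k‖ ≤ 1) (u v : H) :
    |(∑ i, c i * psi d hd (fun k => (N / (2 * R)) * (⟪u, φ k⟫ - b i k))) -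
      (∑ i, c i * psi d hd (fun k => (N / (2 * R)) * (⟪v, φ k⟫ - b i k)))| ≤
      (L / R) * N * Fintype.card ι * ‖u - v‖ := by
  have network_lipschitz := (lipschitzWith_structuredNetwork (lipschitzWith_psi hd)
    (N / (2 * R)) c b).comp (lipschitzWith_innerCoords hφ)
  calc
    _ = dist (structuredNetwork (psi d hd) (N / (2 * R)) c b (innerCoords φ u))
        (structuredNetwork (psi d hd) (N / (2 * R)) c b (innerCoords φ v)) := rfl
    _ ≤ (∑ i, |c i| * (2 * |N / (2 * R)|)) * ‖u - v‖ := by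
      simpa [dist_eq_norm, abs_div] using network_lipschitz.dist_le_mul u v
    _ ≤ (∑ _i : ι, L * (2 * |N / (2 * R)|)) * ‖u - v‖ := by gcongr with i; exact hc i
    _ = (L / R) * N * Fintype.card ι * ‖u - v‖ := by
      rw [abs_of_nonneg (by positivity), Finset.sum_const, Finset.card_univ, nsmul_eq_mul]
      field_simp

/-- For a structured network `h(y) = ∑ᵢ cᵢ ψ((N/(2R))(y − bᵢ))` with `|cᵢ| ≤ L` and the
projection `T(g) = (⟨g,φ₁⟩,…,⟨g,φ_{d₁}⟩)` onto an orthonormal family in `L²(μ)`,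
`|h(T u) − h(T v)| ≤ (L/R) N (N+1)^{d₁} (d₁³ + d₁²) ‖u − v‖_{L²(μ)}`. -/
theorem abs_network_proj_sub_le {Ω : Type*} [MeasurableSpace Ω] (μ : Measure Ω)
    [IsFiniteMeasure μ] (d₁ N : ℕ) (hd : 0 < d₁) (hN : 0 < N)
    (L R : ℝ) (hL : 0 ≤ L) (hR : 0 < R)
    (c : Fin ((N + 1) ^ d₁) → ℝ) (hc : ∀ i, |c i| ≤ L)
    (b : Fin ((N + 1) ^ d₁) → Fin d₁ → ℝ)
    (φ : Fin d₁ → Lp ℝ 2 μ) (hφ : Orthonormal ℝ φ) (u v : Lp ℝ 2 μ) :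
    |(∑ i, c i * psi d₁ hd (fun k => (N / (2 * R)) * (⟪u, φ k⟫ - b i k))) -
      (∑ i, c i * psi d₁ hd (fun k => (N / (2 * R)) * (⟪v, φ k⟫ - b i k)))| ≤
      (L / R) * N * ((N : ℝ) + 1) ^ d₁ * ((d₁ : ℝ) ^ 3 + (d₁ : ℝ) ^ 2) * ‖u - v‖ := by
  have one_le_dim_factor : (1 : ℝ) ≤ (d₁ : ℝ) ^ 3 + (d₁ : ℝ) ^ 2 :=
    (one_le_pow₀ (Nat.one_le_cast.2 hd)).trans (le_add_of_nonneg_right (by positivity))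
  calc
    _ ≤ (L / R) * N * ((N : ℝ) + 1) ^ d₁ * ‖u - v‖ := by
      simpa using abs_network_proj_sub_le_general hd N.cast_nonneg hR hc b
        (fun k => (hφ.norm_eq_one k).le) u v
    _ ≤ _ := mul_le_mul_of_nonneg_right
      (le_mul_of_one_le_right (by positivity) one_le_dim_factor) (norm_nonneg _)
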